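/- Let τ be a shift-continuous T₁ topology on the bicyclic monoid C(p,q). If there exists a point q^i p^j ∈ C(p,q) such that the subspace ↓≼ q^i p^j is quasi-regular at q^i p^j, then for every point q^m p^n ∈ C(p,q) the subspace ↓≼ q^m p^n is quasi-regular at q^m p^n. -/

import Mathlib

/-- The bicyclic monoid `C(p,q)` modeled on `ℕ × ℕ`, where `(k, l)` represents `q^k p^l`:
`(k,l)·(m,n) = (k + (m ∸ l), n + (l ∸ m))`. -/
def bmul (a b : ℕ × ℕ) : ℕ × ℕ := (a.1 + (b.1 - a.2), b.2 + (a.2 - b.1))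

/-- The natural partial order on the bicyclic monoid: `x ≼ y` iff `x = y·e`
for some idempotent `e`. -/
def bLe (x y : ℕ × ℕ) : Prop := ∃ e : ℕ × ℕ, bmul e e = e ∧ x = bmul y e

/-- `↓≼ x`, the down-set of `x` with respect to the natural partial order. -/
def bDown (x : ℕ × ℕ) : Set (ℕ × ℕ) := {y | bLe y x}

lemma self_mem_bDown (i j : ℕ) : ((i, j) : ℕ × ℕ) ∈ bDown (i, j) :=
  ⟨(j, j), by simp [bmul], by simp [bmul]⟩

/-- The subspace topology on a subset `Y` of the bicyclic monoid. -/
def subT (τ : TopologicalSpace (ℕ × ℕ)) (Y : Set (ℕ × ℕ)) : TopologicalSpace Y :=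
  TopologicalSpace.induced Subtype.val τ

/-- A space is quasi-regular at a point `x` if every open neighbourhood `U` of `x`
contains the closure of some nonempty open set. -/
def QuasiRegularAt {X : Type*} (t : TopologicalSpace X) (x : X) : Prop :=
  ∀ U : Set X, @IsOpen X t U → x ∈ U →
    ∃ V : Set X, V.Nonempty ∧ @IsOpen X t V ∧ @closure X t V ⊆ U

/-!
The down-set of `q^i p^j` is the diagonal ray `{q^(i+k) p^(j+k)}`. The two-sided translation
`z ↦ q^m p^i · z · q^j p^n` sends `q^(i+k) p^(j+k)` to `q^(m+k) p^(n+k)`, and its inverse on these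
rays is a translation of the same form. Hence any two principal down-sets are homeomorphic by a map
matching their top elements, and quasi-regularity at the top is carried across.
-/

theorem QuasiRegularAt.map {X Y : Type*} {s : TopologicalSpace X} {t : TopologicalSpace Y}
    {x : X} (h : QuasiRegularAt s x) {f : X → Y} (hcont : Continuous f) (hopen : IsOpenMap f)
    (hclosed : IsClosedMap f) : QuasiRegularAt t (f x) := by
  intro U hU hxU
  obtain ⟨V, hVne, hVopen, hVU⟩ := h (f ⁻¹' U) (hU.preimage hcont) hxU
  refine ⟨f '' V, hVne.image f, hopen V hVopen, ?_⟩
  calc closure (f '' V) ⊆ f '' closure V := hclosed.closure_image_subset V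
    _ ⊆ U := Set.image_subset_iff.2 hVU

theorem bmul_self_eq_self_iff (e : ℕ × ℕ) : bmul e e = e ↔ e.1 = e.2 := by
  simp only [bmul, Prod.ext_iff]
  omega

theorem bmul_diag (x : ℕ × ℕ) (k : ℕ) : bmul x (k, k) = x + (k - x.2, k - x.2) := by
  simp only [bmul, Prod.ext_iff, Prod.fst_add, Prod.snd_add, true_and]
  omega

theorem mem_bDown_iff {x y : ℕ × ℕ} : y ∈ bDown x ↔ ∃ k, y = x + (k, k) := by
  constructor
  · rintro ⟨⟨a, b⟩, he, rfl⟩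
    obtain rfl : a = b := (bmul_self_eq_self_iff _).1 he
    exact ⟨a - x.2, bmul_diag x a⟩
  · rintro ⟨k, rfl⟩
    exact ⟨(x.2 + k, x.2 + k), (bmul_self_eq_self_iff _).2 rfl, by simp [bmul_diag]⟩

/-- The two-sided translation `z ↦ q^m p^i · z · q^j p^n` for `x = q^i p^j` and `y = q^m p^n`,
which moves the down-set of `x` onto that of `y`. -/
def bShift (x y z : ℕ × ℕ) : ℕ × ℕ := bmul (bmul (y.1, x.1) z) (x.2, y.2)

theorem bShift_add_diag (x y : ℕ × ℕ) (k : ℕ) : bShift x y (x + (k, k)) = y + (k, k) := by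
  simp only [bShift, bmul, Prod.ext_iff, Prod.fst_add, Prod.snd_add]
  omega

theorem bShift_self (x y : ℕ × ℕ) : bShift x y x = y := bShift_add_diag x y 0

theorem bShift_mem_bDown {x z : ℕ × ℕ} (y : ℕ × ℕ) (hz : z ∈ bDown x) :
    bShift x y z ∈ bDown y := by
  obtain ⟨k, rfl⟩ := mem_bDown_iff.1 hz
  exact mem_bDown_iff.2 ⟨k, bShift_add_diag x y k⟩

theorem bShift_bShift {x z : ℕ × ℕ} (y : ℕ × ℕ) (hz : z ∈ bDown x) :
    bShift y x (bShift x y z) = z := by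
  obtain ⟨k, rfl⟩ := mem_bDown_iff.1 hz
  rw [bShift_add_diag, bShift_add_diag]

/-- The bijection between two principal down-sets given by the translations `bShift x y` and
`bShift y x`. -/
def bDownEquiv (x y : ℕ × ℕ) : bDown x ≃ bDown y where
  toFun z := ⟨bShift x y z, bShift_mem_bDown y z.2⟩
  invFun z := ⟨bShift y x z, bShift_mem_bDown x z.2⟩
  left_inv z := Subtype.ext (bShift_bShift y z.2)
  right_inv z := Subtype.ext (bShift_bShift x z.2)

section ShiftContinuous

variable {τ : TopologicalSpace (ℕ × ℕ)}
  (hleft : ∀ a : ℕ × ℕ, @Continuous (ℕ × ℕ) (ℕ × ℕ) τ τ (fun x => bmul a x))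
  (hright : ∀ a : ℕ × ℕ, @Continuous (ℕ × ℕ) (ℕ × ℕ) τ τ (fun x => bmul x a))

include hleft hright

theorem continuous_bShift (x y : ℕ × ℕ) : @Continuous _ _ τ τ (bShift x y) :=
  (hright (x.2, y.2)).comp (hleft (y.1, x.1))

theorem continuous_bDownEquiv (x y : ℕ × ℕ) :
    @Continuous _ _ (subT τ (bDown x)) (subT τ (bDown y)) (bDownEquiv x y) :=
  continuous_induced_rng.2 ((continuous_bShift hleft hright x y).comp continuous_induced_dom)

/-- The bijection `bDownEquiv x y` as a homeomorphism of subspaces, for a shift-continuous topology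
`τ`. The topologies are passed explicitly because `ℕ × ℕ` already carries the product topology as
an instance. -/
def bDownHomeomorph (x y : ℕ × ℕ) :
    @Homeomorph (bDown x) (bDown y) (subT τ (bDown x)) (subT τ (bDown y)) :=
  @Homeomorph.mk _ _ (subT τ (bDown x)) (subT τ (bDown y)) (bDownEquiv x y)
    (continuous_bDownEquiv hleft hright x y) (continuous_bDownEquiv hleft hright y x)

end ShiftContinuous

theorem stmt11_general (τ : TopologicalSpace (ℕ × ℕ))
    (hleft : ∀ a : ℕ × ℕ, @Continuous (ℕ × ℕ) (ℕ × ℕ) τ τ (fun x => bmul a x))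
    (hright : ∀ a : ℕ × ℕ, @Continuous (ℕ × ℕ) (ℕ × ℕ) τ τ (fun x => bmul x a))
    (i j : ℕ)
    (hqr : QuasiRegularAt (subT τ (bDown (i, j))) ⟨(i, j), self_mem_bDown i j⟩)
    (m n : ℕ) :
    QuasiRegularAt (subT τ (bDown (m, n))) ⟨(m, n), self_mem_bDown m n⟩ := by
  let φ := bDownHomeomorph hleft hright (i, j) (m, n)
  have hφ : φ ⟨(i, j), self_mem_bDown i j⟩ = ⟨(m, n), self_mem_bDown m n⟩ :=
    Subtype.ext (bShift_self (i, j) (m, n))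
  rw [← hφ]
  exact hqr.map φ.continuous φ.isOpenMap φ.isClosedMap

/-- Lemma 4: let `τ` be a shift-continuous `T₁` topology on `C(p,q)`. If the subspace
`↓≼ q^i p^j` is quasi-regular at `q^i p^j` for some point `q^i p^j`, then for every point
`q^m p^n` the subspace `↓≼ q^m p^n` is quasi-regular at `q^m p^n`. -/
theorem stmt11 (τ : TopologicalSpace (ℕ × ℕ))
    (hT1 : @T1Space (ℕ × ℕ) τ)
    (hleft : ∀ a : ℕ × ℕ, @Continuous (ℕ × ℕ) (ℕ × ℕ) τ τ (fun x => bmul a x))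
    (hright : ∀ a : ℕ × ℕ, @Continuous (ℕ × ℕ) (ℕ × ℕ) τ τ (fun x => bmul x a))
    (i j : ℕ)
    (hqr : QuasiRegularAt (subT τ (bDown (i, j))) ⟨(i, j), self_mem_bDown i j⟩) :
    ∀ m n : ℕ, QuasiRegularAt (subT τ (bDown (m, n))) ⟨(m, n), self_mem_bDown m n⟩ :=
  stmt11_general τ hleft hright i j hqr
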